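/- Let a_1, …, a_n (weights) and α_1, …, α_r (positive roots) be linear functionals on ℝ^m and c_1, …, c_n real constants, and assume the conical condition: for every nonzero β ∈ ℝ^m, Σ_{j=1}^{n} |a_j(β)| > 2 Σ_{k=1}^{r} |α_k(β)|. Then for every polynomial function R on ℝ^m with complex coefficients and every linear functional ζ on ℝ^m, the function σ ↦ e^{2πi ζ(σ)} R(σ) · ∏_{k=1}^{r} ((1/π) sinh(π α_k(σ)))² · ∏_{j=1}^{n} (π / cosh(π(a_j(σ) + c_j))) is integrable on ℝ^m. (This is the convergence of the integral defining the twisted trace on the quantized Coulomb branch in the paper's main theorem.) -/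

import Mathlib

/-!
Compactness of the unit sphere upgrades the conical condition to a uniform one:
`δ ‖β‖ ≤ ∑ |a_j β| - 2 ∑ |α_k β|` for some `δ > 0`. Since `sinh (π x) = O(exp (π |x|))` and
`1 / cosh (π (x + c)) = O(exp (-π |x|))`, the hyperbolic factors are together
`O(exp (-π δ ‖σ‖))`, and this exponential decay beats the polynomial growth of the other factors.
-/

open Complex Real MeasureTheory

open Asymptotics Filter

section Hyperbolic

variable {X ι : Type*} {l : Filter X}

lemma isBigO_sinh_comp_exp_abs (f : X → ℝ) :
    (fun x => Real.sinh (f x)) =O[l] fun x => Real.exp |f x| := by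
  refine isBigO_of_le l fun x => ?_
  rw [Real.norm_eq_abs, Real.norm_of_nonneg (Real.exp_pos _).le, Real.abs_sinh,
    ← Real.cosh_add_sinh]
  linarith [Real.cosh_pos |f x|]

lemma exp_abs_le_two_mul_cosh (x : ℝ) : Real.exp |x| ≤ 2 * Real.cosh x := by
  rw [← Real.cosh_abs, ← Real.cosh_add_sinh]
  linarith [Real.sinh_lt_cosh |x|]

lemma isBigO_inv_cosh_comp_exp_neg_abs (f : X → ℝ) :
    (fun x => (Real.cosh (f x))⁻¹) =O[l] fun x => Real.exp (-|f x|) := by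
  refine .of_bound 2 (.of_forall fun x => ?_)
  rw [norm_inv, Real.norm_of_nonneg (Real.cosh_pos _).le, Real.norm_of_nonneg (Real.exp_pos _).le,
    Real.exp_neg, ← div_eq_mul_inv, inv_le_comm₀ (Real.cosh_pos _) (by positivity), inv_div,
    div_le_iff₀' two_pos]
  exact exp_abs_le_two_mul_cosh (f x)

lemma isBigO_exp_neg_abs_add_const (f : X → ℝ) (c : ℝ) :
    (fun x => Real.exp (-|f x + c|)) =O[l] fun x => Real.exp (-|f x|) := by
  refine Real.isBigO_exp_comp_exp_comp.2 (isBoundedUnder_of ⟨|c|, fun x => ?_⟩)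
  have := abs_sub (f x + c) c
  rw [add_sub_cancel_right] at this
  simp only [Pi.sub_apply]
  linarith

lemma isBigO_prod_sinh_sq [Fintype ι] (α : ι → X → ℝ) :
    (fun x => ∏ k, ((1 / π * Real.sinh (π * α k x) : ℝ) : ℂ) ^ 2) =O[l]
      fun x => Real.exp (π * (2 * ∑ k, |α k x|)) := by
  have hfactor (k : ι) : (fun x => ((1 / π * Real.sinh (π * α k x) : ℝ) : ℂ) ^ 2) =O[l]
      fun x => Real.exp |π * α k x| ^ 2 :=
    (isBigO_ofReal_left.2 ((isBigO_sinh_comp_exp_abs _).const_mul_left _)).pow 2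
  refine (IsBigO.finsetProd fun k _ => hfactor k).congr_right fun x => ?_
  simp only [← Real.exp_nat_mul, ← Real.exp_sum, abs_mul, abs_of_pos Real.pi_pos, Finset.mul_sum]
  exact congrArg _ (Finset.sum_congr rfl fun k _ => by push_cast; ring)

lemma isBigO_prod_div_cosh [Fintype ι] (a : ι → X → ℝ) (c : ι → ℝ) :
    (fun x => ∏ j, (π : ℂ) / ((Real.cosh (π * (a j x + c j)) : ℝ) : ℂ)) =O[l]
      fun x => Real.exp (-(π * ∑ j, |a j x|)) := by
  have hfactor (j : ι) : (fun x => (π : ℂ) / ((Real.cosh (π * (a j x + c j)) : ℝ) : ℂ)) =O[l]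
      fun x => Real.exp (-|π * a j x|) := by
    have h : (fun x => π * (Real.cosh (π * a j x + π * c j))⁻¹) =O[l]
        fun x => Real.exp (-|π * a j x|) :=
      ((isBigO_inv_cosh_comp_exp_neg_abs _).trans
        (isBigO_exp_neg_abs_add_const _ _)).const_mul_left π
    refine (isBigO_ofReal_left.2 h).congr_left fun x => ?_
    rw [← mul_add, ← div_eq_mul_inv, Complex.ofReal_div]
  refine (IsBigO.finsetProd fun j _ => hfactor j).congr_right fun x => ?_
  simp only [← Real.exp_sum, abs_mul, abs_of_pos Real.pi_pos, Finset.sum_neg_distrib,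
    Finset.mul_sum]

end Hyperbolic

section Polynomial

variable {ι : Type*}

lemma isBigO_mvPolynomial_eval {X R : Type*} {l : Filter X} [SeminormedCommRing R]
    {g : ι → X → R} {h : X → ℝ} (hh : 1 ≤ᶠ[l] h) (hg : ∀ i, g i =O[l] h)
    (p : MvPolynomial ι R) :
    (fun x => MvPolynomial.eval (fun i => g i x) p) =O[l] fun x => h x ^ p.totalDegree := by
  simp only [MvPolynomial.eval_eq]
  refine IsBigO.fun_sum fun d hd => ?_
  have hmonomial : (fun x => ∏ i ∈ d.support, g i x ^ d i) =O[l]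
      fun x => h x ^ ∑ i ∈ d.support, d i := by
    simp only [← Finset.prod_pow_eq_pow_sum]
    exact IsBigO.finsetProd fun i _ => (hg i).pow _
  exact (hmonomial.trans (.pow_of_le_right hh (MvPolynomial.le_totalDegree hd))).const_mul_left _

lemma isBigO_exp_mul_eval [Fintype ι] (θ : EuclideanSpace ℝ ι → ℝ) (R : MvPolynomial ι ℂ) :
    (fun σ : EuclideanSpace ℝ ι => Complex.exp (2 * π * Complex.I * θ σ) *
      MvPolynomial.eval (fun i => ((σ i : ℝ) : ℂ)) R) =O[⊤]
        fun σ => (1 + ‖σ‖) ^ R.totalDegree := by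
  have hexp (σ : EuclideanSpace ℝ ι) : ‖Complex.exp (2 * π * Complex.I * θ σ)‖ = 1 := by
    simp [Complex.norm_exp]
  have hcoord (i : ι) : (fun σ : EuclideanSpace ℝ ι => ((σ i : ℝ) : ℂ)) =O[⊤]
      fun σ => 1 + ‖σ‖ :=
    isBigO_of_le _ fun σ => by
      have h₀ : 0 ≤ 1 + ‖σ‖ := by positivity
      rw [Complex.norm_real, Real.norm_of_nonneg h₀]
      linarith [PiLp.norm_apply_le σ i]
  have heval := isBigO_mvPolynomial_eval (.of_forall fun σ => by simp) hcoord R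
  exact (heval.norm_left.congr_left fun σ => by rw [norm_mul, hexp, one_mul]).of_norm_left

lemma continuous_exp_mul_eval {θ : EuclideanSpace ℝ ι → ℝ} (hθ : Continuous θ)
    (R : MvPolynomial ι ℂ) :
    Continuous fun σ : EuclideanSpace ℝ ι => Complex.exp (2 * π * Complex.I * θ σ) *
      MvPolynomial.eval (fun i => ((σ i : ℝ) : ℂ)) R :=
  (by fun_prop : Continuous fun σ => Complex.exp (2 * π * Complex.I * θ σ)).mul
    ((MvPolynomial.continuous_eval R).comp (by fun_prop))

end Polynomial

section ExponentialDecay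

lemma pow_mul_exp_neg_mul_le {b t : ℝ} (hb : 0 < b) (ht : 0 ≤ t) (n : ℕ) :
    t ^ n * Real.exp (-(b * t)) ≤ n.factorial / b ^ n := by
  have h := Real.pow_div_factorial_le_exp (b * t) (by positivity) n
  rw [div_le_iff₀ (by positivity), mul_pow] at h
  rw [Real.exp_neg, ← div_eq_mul_inv, div_le_div_iff₀ (Real.exp_pos _) (by positivity)]
  linarith

variable {E : Type*} [NormedAddCommGroup E]

lemma isBigO_one_add_norm_pow_mul_exp_neg {b : ℝ} (hb : 0 < b) (N k : ℕ) :
    (fun x : E => (1 + ‖x‖) ^ N * Real.exp (-(b * ‖x‖))) =O[⊤]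
      fun x => (1 + ‖x‖) ^ (-(k : ℝ)) := by
  refine .of_bound (Real.exp b * ((N + k).factorial / b ^ (N + k))) (.of_forall fun x => ?_)
  have ht : 0 < 1 + ‖x‖ := by positivity
  rw [Real.norm_of_nonneg (by positivity), Real.norm_of_nonneg (by positivity),
    Real.rpow_neg ht.le, Real.rpow_natCast, ← div_eq_mul_inv, le_div_iff₀ (by positivity)]
  calc (1 + ‖x‖) ^ N * Real.exp (-(b * ‖x‖)) * (1 + ‖x‖) ^ k
      = Real.exp b * ((1 + ‖x‖) ^ (N + k) * Real.exp (-(b * (1 + ‖x‖)))) := by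
        rw [show -(b * ‖x‖) = b + -(b * (1 + ‖x‖)) by ring, Real.exp_add]
        ring
    _ ≤ Real.exp b * ((N + k).factorial / b ^ (N + k)) := by
        gcongr
        exact pow_mul_exp_neg_mul_le hb ht.le _

lemma integrable_one_add_norm_pow_mul_exp_neg [MeasurableSpace E] [OpensMeasurableSpace E]
    (μ : Measure E) [μ.HasTemperateGrowth] {b : ℝ} (hb : 0 < b) (N : ℕ) :
    Integrable (fun x => (1 + ‖x‖) ^ N * Real.exp (-(b * ‖x‖))) μ :=
  (isBigO_one_add_norm_pow_mul_exp_neg hb N _).integrable (by fun_prop)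
    μ.integrable_pow_neg_integrablePower

end ExponentialDecay

section Conical

variable {E : Type*} [NormedAddCommGroup E] [NormedSpace ℝ E]

lemma exists_mul_norm_le_of_homogeneous [ProperSpace E] {f : E → ℝ} (hf : Continuous f)
    (hsmul : ∀ t : ℝ, 0 < t → ∀ x, f (t • x) = t * f x) (hpos : ∀ x, x ≠ 0 → 0 < f x) :
    ∃ δ : ℝ, 0 < δ ∧ ∀ x, δ * ‖x‖ ≤ f x := by
  obtain ⟨δ, hδ, hle⟩ := (isCompact_sphere (0 : E) 1).exists_forall_le' hf.continuousOn
    fun x hx => hpos x (ne_zero_of_mem_unit_sphere ⟨x, hx⟩)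
  refine ⟨δ, hδ, fun x => ?_⟩
  rcases eq_or_ne x 0 with rfl | hx
  · have h₀ := hsmul 2 two_pos 0
    rw [smul_zero] at h₀
    rw [norm_zero]
    linarith
  have hn : 0 < ‖x‖ := norm_pos_iff.2 hx
  have hunit : δ ≤ f (‖x‖⁻¹ • x) := hle _ (by simp [norm_smul, hn.ne'])
  rwa [hsmul _ (inv_pos.2 hn), ← div_eq_inv_mul, le_div_iff₀ hn] at hunit

variable [FiniteDimensional ℝ E] {ι κ : Type*} [Fintype ι] [Fintype κ]

lemma exists_mul_norm_le_of_conical (a : ι → E →ₗ[ℝ] ℝ) (α : κ → E →ₗ[ℝ] ℝ)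
    (hconical : ∀ β, β ≠ 0 → 2 * ∑ k, |α k β| < ∑ j, |a j β|) :
    ∃ δ : ℝ, 0 < δ ∧ ∀ β, δ * ‖β‖ ≤ ∑ j, |a j β| - 2 * ∑ k, |α k β| := by
  have : ProperSpace E := FiniteDimensional.proper_real E
  have ha (j : ι) : Continuous (a j) := (a j).continuous_of_finiteDimensional
  have hα (k : κ) : Continuous (α k) := (α k).continuous_of_finiteDimensional
  refine exists_mul_norm_le_of_homogeneous (by fun_prop) (fun t ht β => ?_)
    fun β hβ => sub_pos.2 (hconical β hβ)
  simp only [map_smul, smul_eq_mul, abs_mul, abs_of_pos ht, ← Finset.mul_sum]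
  ring

theorem stmt14_general [MeasurableSpace E] [BorelSpace E] {μ : Measure E} [μ.HasTemperateGrowth]
    (a : ι → E →ₗ[ℝ] ℝ) (α : κ → E →ₗ[ℝ] ℝ) (c : ι → ℝ)
    (hconical : ∀ β, β ≠ 0 → 2 * ∑ k, |α k β| < ∑ j, |a j β|)
    {f : E → ℂ} {N : ℕ} (hfN : f =O[⊤] fun x => (1 + ‖x‖) ^ N) (hf : AEStronglyMeasurable f μ) :
    Integrable (fun x => f x * (∏ k, ((1 / π * Real.sinh (π * α k x) : ℝ) : ℂ) ^ 2) *
      ∏ j, (π : ℂ) / ((Real.cosh (π * (a j x + c j)) : ℝ) : ℂ)) μ := by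
  obtain ⟨δ, hδ, hgap⟩ := exists_mul_norm_le_of_conical a α hconical
  have ha (j : ι) : Continuous (a j) := (a j).continuous_of_finiteDimensional
  have hα (k : κ) : Continuous (α k) := (α k).continuous_of_finiteDimensional
  have hsinh : Continuous fun x => ∏ k, ((1 / π * Real.sinh (π * α k x) : ℝ) : ℂ) ^ 2 := by
    fun_prop
  have hcosh : Continuous fun x => ∏ j, (π : ℂ) / ((Real.cosh (π * (a j x + c j)) : ℝ) : ℂ) := by
    fun_prop (disch := exact fun _ => Complex.ofReal_ne_zero.2 (Real.cosh_pos _).ne')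
  have hdecay : (fun x => Real.exp (π * (2 * ∑ k, |α k x|)) * Real.exp (-(π * ∑ j, |a j x|)))
      =O[⊤] fun x => Real.exp (-(π * δ * ‖x‖)) := by
    refine isBigO_of_le _ fun x => ?_
    rw [← Real.exp_add, Real.norm_of_nonneg (Real.exp_pos _).le,
      Real.norm_of_nonneg (Real.exp_pos _).le, Real.exp_le_exp]
    linarith [mul_le_mul_of_nonneg_left (hgap x) Real.pi_pos.le]
  refine IsBigO.integrable ((hf.mul hsinh.aestronglyMeasurable).mul hcosh.aestronglyMeasurable) ?_
    (integrable_one_add_norm_pow_mul_exp_neg μ (mul_pos Real.pi_pos hδ) N)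
  simp only [mul_assoc (f _)]
  exact hfN.mul (((isBigO_prod_sinh_sq _).mul (isBigO_prod_div_cosh _ c)).trans hdecay)

end Conical

/-- Convergence of the integral defining the twisted trace on the quantized Coulomb
branch: under the conical condition `Σ_j |a_j(β)| > 2 Σ_k |α_k(β)|` for all `β ≠ 0`,
the function
`σ ↦ e^{2πiζ(σ)} R(σ) ∏_k ((1/π) sinh(πα_k(σ)))² ∏_j π/cosh(π(a_j(σ) + c_j))`
is integrable on `ℝ^m`. -/
theorem stmt14 (m n r : ℕ)
    (a : Fin n → (EuclideanSpace ℝ (Fin m) →ₗ[ℝ] ℝ))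
    (α : Fin r → (EuclideanSpace ℝ (Fin m) →ₗ[ℝ] ℝ))
    (c : Fin n → ℝ)
    (hconical : ∀ β : EuclideanSpace ℝ (Fin m), β ≠ 0 →
      2 * ∑ k : Fin r, |α k β| < ∑ j : Fin n, |a j β|)
    (R : MvPolynomial (Fin m) ℂ)
    (ζ : EuclideanSpace ℝ (Fin m) →ₗ[ℝ] ℝ) :
    MeasureTheory.Integrable
      (fun σ : EuclideanSpace ℝ (Fin m) =>
        Complex.exp (2 * Real.pi * Complex.I * (ζ σ)) *
          MvPolynomial.eval (fun i => ((σ i : ℝ) : ℂ)) R *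
            (∏ k : Fin r, (((1 / Real.pi * Real.sinh (Real.pi * (α k σ)) : ℝ) : ℂ)) ^ 2) *
              ∏ j : Fin n, ((Real.pi : ℂ) / ((Real.cosh (Real.pi * (a j σ + c j)) : ℝ) : ℂ)))
      (MeasureTheory.volume : MeasureTheory.Measure (EuclideanSpace ℝ (Fin m))) :=
  stmt14_general a α c hconical (isBigO_exp_mul_eval ζ R) <|
    (continuous_exp_mul_eval ζ.continuous_of_finiteDimensional R).aestronglyMeasurable
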